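/- arXiv:1510.00756 — 3 statements merged into one kernel-verified Lean document; each statement's English description precedes it below -/
import Mathlib

section
/- For every hypergraph G, the hypertree width of G is at most the hierarchy width of G: tw(G) ≤ hw(G). -/
/-!
The recursion defining `hw` is unfolded into a decomposition in which every bag is the full
vertex set of its label: `ρ u = ⋃ e ∈ χ u, dep e`. For such a decomposition the special condition
and the covering of bags are automatic, the choice of the root is irrelevant, and the only real
requirement is that the nodes whose label meets a given vertex form a subtree (`HasLabelTree`).

Two operations build these trees. Adding one hyperedge to all labels costs one unit of width
(`HasLabelTree.insert_edge`): its vertices then occur in every bag. Two vertex-disjoint hypergraphs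
are decomposed together by joining their trees with an edge (`HasLabelTree.union_disjoint`),
at no cost.
Let `C` be a component of `E`. Some `f ∈ C` satisfies `hw (C - f) + 1 ≤ hw E`
(`exists_hw_erase_lt`), and `hw (E \ C) ≤ hw E` (`hw_sdiff_le`); induction on the number
of hyperedges applied to `C - f` and `E \ C` concludes.
-/

/-- Connectivity relation between hyperedges within the edge set `E` of a hypergraph whose
hyperedges have vertex sets given by `dep`. -/
def EdgeConn {α ι : Type*} (dep : ι → Finset α) (E : Finset ι) : ι → ι → Prop :=
  Relation.ReflTransGen fun a b => a ∈ E ∧ b ∈ E ∧ ∃ v, v ∈ dep a ∧ v ∈ dep b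

open Classical in
/-- Hierarchy width of the hypergraph with hyperedges `E`, where hyperedge `e` consists of
the vertices `dep e`: `0` if there are no hyperedges; `1 +` the minimum over single-edge
removals for a connected hypergraph; the maximum over connected components otherwise. -/
noncomputable def hw {α ι : Type*} [DecidableEq ι] (dep : ι → Finset α) (E : Finset ι) : ℕ :=
  E.sup fun e =>
    1 + ((E.filter fun f => EdgeConn dep E e f).attach.inf fun f =>
      ((hw dep ((E.filter fun f => EdgeConn dep E e f).erase f.1) : ℕ∞))).toNat
termination_by E.card
decreasing_by
  exact lt_of_lt_of_le (Finset.card_erase_lt_of_mem f.2)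
    (Finset.card_le_card (Finset.filter_subset _ _))

/-- A hypertree decomposition of the hypergraph with hyperedges `E` (hyperedge `e` has
vertex set `dep e`): a tree decomposition `(T, ρ)` of the primal graph together with a
hyperedge labeling `χ` such that every vertex of every bag is covered by a hyperedge of the
label of that bag, and the "special condition": for every node `u`, hyperedge `e ∈ χ u`,
and descendant `v` of `u`, one has `dep e ∩ ρ v ⊆ ρ u`  (a node `v` is a descendant of `u`
if `u` lies on the unique path from `v` to the root). -/
structure HypertreeDecomp {α ι : Type*} (dep : ι → Finset α) (E : Finset ι) where
  τ : Type
  fin : Fintype τ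
  T : SimpleGraph τ
  tree : T.IsTree
  root : τ
  ρ : τ → Finset α
  χ : τ → Finset ι
  sub : ∀ v, χ v ⊆ E
  vertexCover : ∀ x : α, (∃ e ∈ E, x ∈ dep e) → ∃ v, x ∈ ρ v
  primalEdgeCover : ∀ e ∈ E, ∀ x ∈ dep e, ∀ y ∈ dep e, ∃ v, x ∈ ρ v ∧ y ∈ ρ v
  vertexConn : ∀ x : α, ∀ u v : τ, x ∈ ρ u → x ∈ ρ v →
    ∀ p : T.Walk u v, p.IsPath → ∀ w ∈ p.support, x ∈ ρ w
  bagCover : ∀ u : τ, ∀ x ∈ ρ u, ∃ e ∈ χ u, x ∈ dep e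
  special : ∀ u : τ, ∀ e ∈ χ u, ∀ v : τ,
    (∀ p : T.Walk v root, p.IsPath → u ∈ p.support) →
    ∀ x ∈ dep e, x ∈ ρ v → x ∈ ρ u

/-- The width of a hypertree decomposition: the size of its largest hyperedge label. -/
noncomputable def HypertreeDecomp.width {α ι : Type*} {dep : ι → Finset α} {E : Finset ι}
    (D : HypertreeDecomp dep E) : ℕ :=
  letI := D.fin
  Finset.univ.sup fun v => (D.χ v).card

/-! ### Label trees -/

/-- The label `s` meets the vertex `x`: some hyperedge of `s` contains `x`. -/
def Touches {α ι : Type*} (dep : ι → Finset α) (s : Finset ι) (x : α) : Prop :=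
  ∃ e ∈ s, x ∈ dep e

/-- There is a finite tree with nodes labelled by at most `k` hyperedges of `E`, such that every
hyperedge occurs in a label and, for each vertex `x`, any two nodes whose labels meet `x` are
joined by a walk through nodes whose labels meet `x`. -/
def HasLabelTree {α ι : Type*} (dep : ι → Finset α) (E : Finset ι) (k : ℕ) : Prop :=
  ∃ (τ : Type) (_ : Fintype τ) (T : SimpleGraph τ) (χ : τ → Finset ι),
    T.IsTree ∧ (∀ v, χ v ⊆ E) ∧ (∀ v, (χ v).card ≤ k) ∧ (∀ e ∈ E, ∃ v, e ∈ χ v) ∧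
    ∀ x u v, Touches dep (χ u) x → Touches dep (χ v) x →
      ∃ p : T.Walk u v, ∀ w ∈ p.support, Touches dep (χ w) x

theorem hasLabelTree_empty {α ι : Type*} (dep : ι → Finset α) (k : ℕ) :
    HasLabelTree dep ∅ k :=
  ⟨Unit, inferInstance, ⊥, fun _ => ∅, SimpleGraph.IsTree.of_subsingleton, by simp, by simp,
    by simp, by simp [Touches]⟩

theorem HasLabelTree.insert_edge {α ι : Type*} [DecidableEq ι] {dep : ι → Finset α} {E : Finset ι}
    {k : ℕ} (h : HasLabelTree dep E k) (f : ι) : HasLabelTree dep (insert f E) (k + 1) := by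
  obtain ⟨τ, hτ, T, χ, hT, hsub, hcard, hcov, hconn⟩ := h
  have htouch : ∀ w x, Touches dep (insert f (χ w)) x ↔ x ∈ dep f ∨ Touches dep (χ w) x := by
    intro w x
    simp [Touches]
  refine ⟨τ, hτ, T, fun v => insert f (χ v), hT, fun v => Finset.insert_subset_insert f (hsub v),
    fun v => (Finset.card_insert_le _ _).trans (Nat.add_le_add_right (hcard v) 1), ?_, ?_⟩
  · intro e he
    rcases Finset.mem_insert.1 he with rfl | he
    · obtain ⟨v⟩ := hT.connected.nonempty
      exact ⟨v, Finset.mem_insert_self _ _⟩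
    · obtain ⟨v, hv⟩ := hcov e he
      exact ⟨v, Finset.mem_insert_of_mem hv⟩
  · intro x u v hu hv
    simp only [htouch] at hu hv ⊢
    by_cases hx : x ∈ dep f
    · obtain ⟨p⟩ := hT.connected.preconnected u v
      exact ⟨p, fun _ _ => Or.inl hx⟩
    · obtain ⟨p, hp⟩ := hconn x u v (hu.resolve_left hx) (hv.resolve_left hx)
      exact ⟨p, fun w hw => Or.inr (hp w hw)⟩

/-- Joining two finite trees by an edge gives a tree: the result is connected, and its number of
edges is small enough. -/
theorem isTree_sum_sup_edge {V W : Type*} [Finite V] [Finite W] {G : SimpleGraph V}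
    {H : SimpleGraph W} (hG : G.IsTree) (hH : H.IsTree) (v : V) (w : W) :
    (SimpleGraph.sum G H ⊔ SimpleGraph.edge (Sum.inl v) (Sum.inr w)).IsTree := by
  have hc := hG.connected.sum_sup_edge (v := v) (w := w) hH.connected
  refine SimpleGraph.isTree_iff_connected_and_card.2
    ⟨hc, le_antisymm ?_ hc.card_vert_le_card_edgeSet_add_one⟩
  have hG' := (SimpleGraph.isTree_iff_connected_and_card.1 hG).2
  have hH' := (SimpleGraph.isTree_iff_connected_and_card.1 hH).2
  have hsum : Nat.card (SimpleGraph.sum G H).edgeSet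
      = Nat.card G.edgeSet + Nat.card H.edgeSet := by
    rw [Nat.card_congr SimpleGraph.edgeSetSumEquiv, Nat.card_sum]
  have hedge : (SimpleGraph.edge (Sum.inl v) (Sum.inr w) : SimpleGraph (V ⊕ W)).edgeSet.ncard
      ≤ 1 := by
    rw [SimpleGraph.edgeSet_edge_of_ne (by simp), Set.ncard_singleton]
  have hun := Set.ncard_union_le (SimpleGraph.sum G H).edgeSet
    (SimpleGraph.edge (Sum.inl v) (Sum.inr w) : SimpleGraph (V ⊕ W)).edgeSet
  rw [← SimpleGraph.edgeSet_sup] at hun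
  simp only [← Nat.card_coe_set_eq] at hun hedge
  rw [Nat.card_sum]
  omega

/-- The trees are joined by an edge; a vertex is met by labels on one side only, so that the nodes
meeting it stay connected. -/
theorem HasLabelTree.union_disjoint {α ι : Type*} [DecidableEq ι] {dep : ι → Finset α}
    {E F : Finset ι} {k : ℕ} (hE : HasLabelTree dep E k) (hF : HasLabelTree dep F k)
    (hdisj : ∀ e ∈ E, ∀ f ∈ F, ∀ x ∈ dep e, x ∉ dep f) : HasLabelTree dep (E ∪ F) k := by
  obtain ⟨τ, _, T, χ, hT, hsub, hcard, hcov, hconn⟩ := hE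
  obtain ⟨τ', _, T', χ', hT', hsub', hcard', hcov', hconn'⟩ := hF
  have hsep : ∀ x u v, Touches dep (χ u) x → ¬ Touches dep (χ' v) x := by
    rintro x u v ⟨e, he, hxe⟩ ⟨f, hf, hxf⟩
    exact hdisj e (hsub u he) f (hsub' v hf) x hxe hxf
  obtain ⟨a⟩ := hT.connected.nonempty
  obtain ⟨b⟩ := hT'.connected.nonempty
  let J := SimpleGraph.sum T T' ⊔ SimpleGraph.edge (Sum.inl a) (Sum.inr b)
  let i : T →g J := (SimpleGraph.Hom.ofLE le_sup_left).comp
    (SimpleGraph.Embedding.sumInl (G := T) (H := T')).toHom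
  let i' : T' →g J := (SimpleGraph.Hom.ofLE le_sup_left).comp
    (SimpleGraph.Embedding.sumInr (G := T) (H := T')).toHom
  refine ⟨τ ⊕ τ', inferInstance, J, Sum.elim χ χ', isTree_sum_sup_edge hT hT' a b, ?_, ?_, ?_, ?_⟩
  · rintro (v | v)
    · exact (hsub v).trans Finset.subset_union_left
    · exact (hsub' v).trans Finset.subset_union_right
  · rintro (v | v)
    · exact hcard v
    · exact hcard' v
  · intro e he
    rcases Finset.mem_union.1 he with he | he
    · obtain ⟨v, hv⟩ := hcov e he
      exact ⟨Sum.inl v, hv⟩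
    · obtain ⟨v, hv⟩ := hcov' e he
      exact ⟨Sum.inr v, hv⟩
  · rintro x (u | u) (v | v) hu hv
    · obtain ⟨p, hp⟩ := hconn x u v hu hv
      refine ⟨p.map i, fun w hw => ?_⟩
      replace hw : w ∈ p.support.map i := by
        rw [← SimpleGraph.Walk.support_map]
        exact hw
      obtain ⟨y, hy, rfl⟩ := List.mem_map.1 hw
      exact hp y hy
    · exact absurd hv (hsep x u v hu)
    · exact absurd hu (hsep x v u hv)
    · obtain ⟨p, hp⟩ := hconn' x u v hu hv
      refine ⟨p.map i', fun w hw => ?_⟩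
      replace hw : w ∈ p.support.map i' := by
        rw [← SimpleGraph.Walk.support_map]
        exact hw
      obtain ⟨y, hy, rfl⟩ := List.mem_map.1 hw
      exact hp y hy

open Classical in
/-- A label tree is a hypertree decomposition once each bag is taken to be the whole vertex set of
its label; the special condition then holds for any root. -/
theorem HasLabelTree.exists_decomp {α ι : Type*} {dep : ι → Finset α} {E : Finset ι}
    {k : ℕ} (h : HasLabelTree dep E k) : ∃ D : HypertreeDecomp dep E, D.width ≤ k := by
  obtain ⟨τ, hτ, T, χ, hT, hsub, hcard, hcov, hconn⟩ := h
  obtain ⟨r⟩ := hT.connected.nonempty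
  have hρ : ∀ u x, x ∈ (χ u).biUnion dep ↔ Touches dep (χ u) x := by
    intro u x
    simp [Touches]
  refine ⟨{ τ := τ, fin := hτ, T := T, tree := hT, root := r, χ := χ, sub := hsub
            ρ := fun u => (χ u).biUnion dep
            vertexCover := ?_
            primalEdgeCover := ?_
            vertexConn := ?_
            bagCover := fun u x hx => (hρ u x).1 hx
            special := fun u e he v _ x hx _ => Finset.mem_biUnion.2 ⟨e, he, hx⟩ }, ?_⟩
  · rintro x ⟨e, he, hx⟩
    obtain ⟨v, hv⟩ := hcov e he
    exact ⟨v, Finset.mem_biUnion.2 ⟨e, hv, hx⟩⟩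
  · intro e he x hx y hy
    obtain ⟨v, hv⟩ := hcov e he
    exact ⟨v, Finset.mem_biUnion.2 ⟨e, hv, hx⟩, Finset.mem_biUnion.2 ⟨e, hv, hy⟩⟩
  · intro x u v hu hv p hp w hw
    rw [hρ] at hu hv ⊢
    obtain ⟨q, hq⟩ := hconn x u v hu hv
    have hpq : p = q.bypass := (hT.existsUnique_path u v).unique hp q.bypass_isPath
    rw [hpq] at hw
    exact hq w (q.support_bypass_subset_support hw)
  · exact Finset.sup_le fun v _ => hcard v

/-! ### Components and hierarchy width -/

theorem EdgeConn.mono {α ι : Type*} {dep : ι → Finset α} {E F : Finset ι} (hEF : E ⊆ F) {e f : ι}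
    (h : EdgeConn dep E e f) : EdgeConn dep F e f :=
  Relation.ReflTransGen.mono (fun _ _ hab => ⟨hEF hab.1, hEF hab.2.1, hab.2.2⟩) _ _ h

open Classical in
/-- The component of the hyperedge `e` in the hypergraph with hyperedges `E`. -/
noncomputable def component {α ι : Type*} (dep : ι → Finset α) (E : Finset ι) (e : ι) :
    Finset ι :=
  E.filter fun f => EdgeConn dep E e f

theorem mem_component {α ι : Type*} {dep : ι → Finset α} {E : Finset ι} {e f : ι} :
    f ∈ component dep E e ↔ f ∈ E ∧ EdgeConn dep E e f := by
  simp [component]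

theorem component_subset {α ι : Type*} (dep : ι → Finset α) (E : Finset ι) (e : ι) :
    component dep E e ⊆ E := fun _ hf => (mem_component.1 hf).1

theorem component_disjoint_sdiff {α ι : Type*} [DecidableEq ι] (dep : ι → Finset α)
    (E : Finset ι) (e : ι) : ∀ a ∈ component dep E e, ∀ b ∈ E \ component dep E e,
      ∀ x ∈ dep a, x ∉ dep b := by
  intro a ha b hb x hxa hxb
  obtain ⟨haE, hea⟩ := mem_component.1 ha
  obtain ⟨hbE, hb⟩ := Finset.mem_sdiff.1 hb
  exact hb (mem_component.2 ⟨hbE, hea.tail ⟨haE, hbE, x, hxa, hxb⟩⟩)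

/-- Deleting a component leaves the other components unchanged. -/
theorem component_sdiff {α ι : Type*} [DecidableEq ι] {dep : ι → Finset α}
    {E : Finset ι} (e : ι) {g : ι} (hg : g ∈ E \ component dep E e) :
    component dep (E \ component dep E e) g = component dep E g := by
  ext f
  rw [mem_component, mem_component]
  constructor
  · rintro ⟨hf, h⟩
    exact ⟨(Finset.mem_sdiff.1 hf).1, h.mono Finset.sdiff_subset⟩
  · rintro ⟨-, h⟩
    -- A walk of hyperedges starting outside the component of `e` never enters it.
    induction h with
    | refl => exact ⟨hg, Relation.ReflTransGen.refl⟩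
    | @tail b c _ hbc ih =>
      obtain ⟨hb, hgb⟩ := ih
      obtain ⟨-, hcE, x, hxb, hxc⟩ := hbc
      have hc : c ∈ E \ component dep E e := by
        refine Finset.mem_sdiff.2 ⟨hcE, fun hc => ?_⟩
        exact component_disjoint_sdiff dep E e c hc b hb x hxc hxb
      exact ⟨hc, hgb.tail ⟨hb, hc, x, hxb, hxc⟩⟩

theorem hw_eq {α ι : Type*} [DecidableEq ι] (dep : ι → Finset α) (E : Finset ι) :
    hw dep E = E.sup fun e => 1 + ((component dep E e).attach.inf fun f =>
      ((hw dep ((component dep E e).erase f.1) : ℕ∞))).toNat := by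
  rw [hw]
  rfl

theorem hw_sdiff_le {α ι : Type*} [DecidableEq ι] (dep : ι → Finset α) (E : Finset ι) (e : ι) :
    hw dep (E \ component dep E e) ≤ hw dep E := by
  rw [hw_eq dep (E \ _), hw_eq dep E]
  refine Finset.sup_le fun g hg => ?_
  rw [component_sdiff e hg]
  exact Finset.le_sup (f := fun e => 1 + ((component dep E e).attach.inf fun f =>
      ((hw dep ((component dep E e).erase f.1) : ℕ∞))).toNat) (Finset.mem_sdiff.1 hg).1

/-- The minimum over single-edge removals is attained, the component of `e ∈ E` being nonempty. -/
theorem exists_hw_erase_lt {α ι : Type*} [DecidableEq ι] (dep : ι → Finset α) {E : Finset ι}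
    {e : ι} (he : e ∈ E) :
    ∃ f ∈ component dep E e, hw dep ((component dep E e).erase f) + 1 ≤ hw dep E := by
  have hne : (component dep E e).attach.Nonempty :=
    ⟨⟨e, mem_component.2 ⟨he, Relation.ReflTransGen.refl⟩⟩, Finset.mem_attach _ _⟩
  obtain ⟨f, -, hf⟩ := Finset.exists_mem_eq_inf _ hne
    (fun f => ((hw dep ((component dep E e).erase f.1) : ℕ∞)))
  refine ⟨f.1, f.2, ?_⟩
  have hle := Finset.le_sup (f := fun e => 1 + ((component dep E e).attach.inf fun f =>
      ((hw dep ((component dep E e).erase f.1) : ℕ∞))).toNat) he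
  rw [← hw_eq dep E] at hle
  simp only [hf, ENat.toNat_natCast] at hle
  omega

theorem hasLabelTree_hw {α ι : Type*} [DecidableEq ι] (dep : ι → Finset α) (E : Finset ι) :
    ∀ k, hw dep E ≤ k → HasLabelTree dep E k := by
  induction E using Finset.strongInduction with
  | H E ih =>
    intro k hk
    rcases E.eq_empty_or_nonempty with rfl | ⟨e, he⟩
    · exact hasLabelTree_empty dep k
    obtain ⟨f, hf, hlt⟩ := exists_hw_erase_lt dep he
    have hCE := component_subset dep E e
    have heC : e ∈ component dep E e := mem_component.2 ⟨he, Relation.ReflTransGen.refl⟩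
    have h₁ : HasLabelTree dep (component dep E e) k := by
      have h := (ih _ ((Finset.erase_ssubset hf).trans_subset hCE) (k - 1) (by omega)).insert_edge f
      rwa [Finset.insert_erase hf, Nat.sub_add_cancel (by omega)] at h
    have h₂ : HasLabelTree dep (E \ component dep E e) k :=
      ih _ (Finset.sdiff_ssubset hCE ⟨e, heC⟩) k ((hw_sdiff_le dep E e).trans hk)
    have h := h₁.union_disjoint h₂ (component_disjoint_sdiff dep E e)
    rwa [Finset.union_sdiff_of_subset hCE] at h

/-- For every hypergraph `G`, the hypertree width of `G` is at most the hierarchy width of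
`G`: there is a hypertree decomposition whose width is at most `hw G`. -/
theorem stmt6 {α ι : Type*} [DecidableEq ι] (dep : ι → Finset α) (E : Finset ι) :
    ∃ D : HypertreeDecomp dep E, D.width ≤ hw dep E := by
  exact (hasLabelTree_hw dep E _ le_rfl).exists_decomp
end

section
/- For every n ≥ 1, the hypergraph of the voting model with logical or ratio semantics—with vertex set {Q, T_1, …, T_n, F_1, …, F_n} and hyperedges {T_i} and {F_i} for each i = 1, …, n together with the two hyperedges {Q, T_1, …, T_n} and {Q, F_1, …, F_n}—has hierarchy width exactly 3. -/
/-- The hyperedges of the voting model with logical or ratio semantics.  The vertices are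
`none` (the query `Q`) and `some (true, i)` (the voter `T i`), `some (false, i)` (the voter
`F i`).  The hyperedge `Sum.inl true` is `φ_T = {Q, T_1, …, T_n}`, the hyperedge
`Sum.inl false` is `φ_F = {Q, F_1, …, F_n}`, and `Sum.inr (b, i)` is the singleton prior
hyperedge `{T i}` (for `b = true`) or `{F i}` (for `b = false`). -/
def votingDepLR (n : ℕ) : Bool ⊕ (Bool × Fin n) → Finset (Option (Bool × Fin n))
  | Sum.inl b => insert none (Finset.univ.image fun i : Fin n => some (b, i))
  | Sum.inr (b, i) => {some (b, i)}

open Classical in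
/-- The connected component of the hyperedge `e` in the edge set `E`. -/
noncomputable def edgeComp {α ι : Type*} (dep : ι → Finset α) (E : Finset ι) (e : ι) : Finset ι :=
  E.filter fun f => EdgeConn dep E e f

section General

variable {α ι : Type*} {dep : ι → Finset α} {E : Finset ι} {e f : ι}

theorem edgeComp_subset : edgeComp dep E e ⊆ E := by
  classical exact Finset.filter_subset _ _

theorem self_mem_edgeComp (he : e ∈ E) : e ∈ edgeComp dep E e := by
  classical exact Finset.mem_filter.2 ⟨he, Relation.ReflTransGen.refl⟩

theorem edgeComp_step {g : ι} (hf : f ∈ edgeComp dep E e) (hg : g ∈ E)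
    (h : ∃ v, v ∈ dep f ∧ v ∈ dep g) : g ∈ edgeComp dep E e := by
  classical
  obtain ⟨hfE, hc⟩ := Finset.mem_filter.1 hf
  exact Finset.mem_filter.2 ⟨hg, Relation.ReflTransGen.tail hc ⟨hfE, hg, h⟩⟩

variable [DecidableEq ι]

theorem hw_le_succ_iff (k : ℕ) :
    hw dep E ≤ k + 1 ↔
      ∀ e ∈ E, ∃ f ∈ edgeComp dep E e, hw dep ((edgeComp dep E e).erase f) ≤ k := by
  classical
  rw [hw, Finset.sup_le_iff]
  refine forall₂_congr fun e he => ?_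
  change 1 + ((edgeComp dep E e).attach.inf fun f =>
      ((hw dep ((edgeComp dep E e).erase f.1) : ℕ∞))).toNat ≤ k + 1 ↔ _
  have hne : (edgeComp dep E e).attach.Nonempty :=
    ⟨⟨e, self_mem_edgeComp he⟩, Finset.mem_attach _ _⟩
  -- The component is nonempty, so the infimum is attained and `toNat` loses nothing.
  obtain ⟨g, -, hg⟩ := Finset.exists_mem_eq_inf _ hne
    (fun f => ((hw dep ((edgeComp dep E e).erase f.1) : ℕ∞)))
  constructor
  · intro h
    rw [hg, ENat.toNat_natCast] at h
    exact ⟨g.1, g.2, by omega⟩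
  · rintro ⟨f, hf, h⟩
    have h1 := Finset.inf_le (f := fun f : {x // x ∈ edgeComp dep E e} =>
      ((hw dep ((edgeComp dep E e).erase f.1) : ℕ∞))) (Finset.mem_attach _ ⟨f, hf⟩)
    rw [hg] at h1 ⊢
    have h2 := Nat.cast_le.1 h1
    rw [ENat.toNat_natCast]
    simp only at h2
    omega

theorem hw_empty : hw dep ∅ = 0 := by
  rw [hw, Finset.sup_empty, Nat.bot_eq_zero]

theorem hw_pos (he : e ∈ E) : 0 < hw dep E := by
  classical
  rw [hw]
  exact lt_of_lt_of_le (by omega) (Finset.le_sup (f := fun e =>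
    1 + ((E.filter fun f => EdgeConn dep E e f).attach.inf fun f =>
      ((hw dep ((E.filter fun f => EdgeConn dep E e f).erase f.1) : ℕ∞))).toNat) he)

/-- A hypergraph with two distinct intersecting hyperedges has width at least `2`. -/
theorem two_le_hw (he : e ∈ E) (hf : f ∈ E) (hne : e ≠ f) (h : ∃ v, v ∈ dep e ∧ v ∈ dep f) :
    2 ≤ hw dep E := by
  by_contra hlt
  obtain ⟨g, -, hg⟩ := (hw_le_succ_iff 0).1 (by omega : hw dep E ≤ 0 + 1) e he
  have h1 := self_mem_edgeComp (dep := dep) he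
  have h2 := edgeComp_step h1 hf h
  by_cases hge : g = e
  · exact absurd (hw_pos (dep := dep) (Finset.mem_erase.2 ⟨fun h => hne (h.trans hge).symm, h2⟩))
      (by omega)
  · exact absurd (hw_pos (dep := dep) (Finset.mem_erase.2 ⟨Ne.symm hge, h1⟩)) (by omega)

/-- One further hyperedge `a` raises a width bound valid for all edge sets without `a` by at
most one: remove `a` from the component containing it. In a component avoiding `a`, removing any
edge will do. The predicate `P` restricts the edge sets considered. -/
theorem hw_le_succ_of_erase {P : ι → Prop} (a : ι) (k : ℕ)
    (hk : ∀ E : Finset ι, (∀ x ∈ E, P x ∧ x ≠ a) → hw dep E ≤ k)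
    (hE : ∀ x ∈ E, P x) : hw dep E ≤ k + 1 := by
  refine (hw_le_succ_iff k).2 fun e he => ?_
  by_cases ha : a ∈ edgeComp dep E e
  · refine ⟨a, ha, hk _ fun x hx => ?_⟩
    obtain ⟨hxa, hx⟩ := Finset.mem_erase.1 hx
    exact ⟨hE x (edgeComp_subset hx), hxa⟩
  · refine ⟨e, self_mem_edgeComp he, hk _ fun x hx => ?_⟩
    have hx := Finset.mem_of_mem_erase hx
    exact ⟨hE x (edgeComp_subset hx), fun h => ha (h ▸ hx)⟩

/-- Pairwise disjoint hyperedges are their own components. -/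
theorem hw_le_one (hE : ∀ x ∈ E, ∀ y ∈ E, (∃ v, v ∈ dep x ∧ v ∈ dep y) → x = y) :
    hw dep E ≤ 1 := by
  classical
  refine (hw_le_succ_iff 0).2 fun e he => ⟨e, self_mem_edgeComp he, ?_⟩
  have : (edgeComp dep E e).erase e = ∅ := by
    refine Finset.eq_empty_of_forall_notMem fun x hx => ?_
    have hc : EdgeConn dep E e x := (Finset.mem_filter.1 (Finset.mem_of_mem_erase hx)).2
    refine Finset.ne_of_mem_erase hx ?_
    clear hx
    induction hc with
    | refl => rfl
    | tail _ hs ih => exact (hE _ hs.1 _ hs.2.1 hs.2.2).symm.trans ih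
  rw [this, hw_empty]

end General

theorem hw_voting_le (n : ℕ) (E : Finset (Bool ⊕ (Bool × Fin n))) : hw (votingDepLR n) E ≤ 3 := by
  refine hw_le_succ_of_erase (P := fun _ => True) (Sum.inl true) 2 (fun E hE => ?_) (by simp)
  refine hw_le_succ_of_erase (Sum.inl false) 1 (fun E hE => ?_) hE
  refine hw_le_one fun x hx y hy => ?_
  have h1 := hE x hx
  have h2 := hE y hy
  rcases x with (_ | _) | ⟨b, i⟩ <;> rcases y with (_ | _) | ⟨c, j⟩ <;>
    simp_all [votingDepLR]

theorem three_le_hw_voting (n : ℕ) (hn : 1 ≤ n) : 3 ≤ hw (votingDepLR n) Finset.univ := by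
  by_contra hlt
  obtain ⟨f, -, hf⟩ := (hw_le_succ_iff 1).1
    (by omega : hw (votingDepLR n) Finset.univ ≤ 1 + 1) (Sum.inl true) (Finset.mem_univ _)
  let i : Fin n := ⟨0, hn⟩
  have hmeet (b : Bool) : ∃ v, v ∈ votingDepLR n (Sum.inl b) ∧ v ∈ votingDepLR n (Sum.inr (b, i)) :=
    ⟨some (b, i), by simp [votingDepLR], by simp [votingDepLR]⟩
  have hT := self_mem_edgeComp (dep := votingDepLR n) (Finset.mem_univ (Sum.inl true))
  have hfac (b : Bool) : Sum.inl b ∈ edgeComp (votingDepLR n) Finset.univ (Sum.inl true) :=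
    edgeComp_step hT (Finset.mem_univ _) ⟨none, by simp [votingDepLR], by simp [votingDepLR]⟩
  have hpri (b : Bool) : Sum.inr (b, i) ∈ edgeComp (votingDepLR n) Finset.univ (Sum.inl true) :=
    edgeComp_step (hfac b) (Finset.mem_univ _) (hmeet b)
  -- `f` lies on at most one of the two sides; `b` is a side it does not touch.
  obtain ⟨b, hb1, hb2⟩ : ∃ b : Bool, Sum.inl b ≠ f ∧ Sum.inr (b, i) ≠ f := by
    rcases f with c | ⟨c, j⟩ <;> exact ⟨!c, by simp, by simp⟩
  have := two_le_hw (Finset.mem_erase.2 ⟨hb1, hfac b⟩) (Finset.mem_erase.2 ⟨hb2, hpri b⟩)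
    (by simp) (hmeet b)
  omega

/-- For every `n ≥ 1`, the hypergraph of the voting model with logical or ratio semantics
has hierarchy width exactly `3`. -/
theorem stmt9 (n : ℕ) (hn : 1 ≤ n) : hw (votingDepLR n) Finset.univ = 3 := by
  exact le_antisymm (hw_voting_le n _) (three_le_hw_voting n hn)
end

section
/- Consider the voting model with linear semantics in which all prior weights are zero (w_{T_i} = w_{F_i} = 0 for all i) and the vote weight w > 0 is a fixed sufficiently large constant (independent of n). Then there is a constant c > 0 (depending only on w) such that for all sufficiently large n, the mixing time of Gibbs sampling on this model satisfies t_mix ≥ 2^{c·n}. -/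
/-!
The set `S = {Q = 1}` is a bottleneck of the chain.

* By the symmetry exchanging `Q = 1` with `Q = -1` and the voters `T` with the voters `F`,
  `π(S) = 1/2` (`sum_exp_symm`).
* A step from `S` to its complement flips `Q` and hence negates the energy `E`, so
  `π(x) P(x, y) ≤ (1/Z) · e^E e^{-E} / (e^E + e^{-E}) ≤ 1/Z` (`flow_le`).  There are `2^{2n+1}` worlds
  and `Z ≥ e^{wn}` (all `T` set, no `F` set, `Q = 1`), so the stationary flow out of `S` is at most
  `2^{2n+1} e^{-wn}`, exponentially small once `e^w > 4`.
* For a chain started from `π` restricted to `S`, the mass outside `S` grows by at most this flow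
  at each step (`escape_le`), whereas a mixed chain has mass at least `1/4` outside `S` from every
  starting state.  Thus `1/8 ≤ t · 2^{2n+1} e^{-wn}`.

With `w ≥ 8` this leaves enough room to take `c = 1`.
-/

/-- The Gibbs distribution `π(x) = exp(energy x) / Z` on worlds `V → S`. -/
noncomputable def gibbsPi {V S : Type*} [Fintype V] [DecidableEq V] [Fintype S] [DecidableEq S]
    (energy : (V → S) → ℝ) (x : V → S) : ℝ :=
  Real.exp (energy x) / ∑ y : V → S, Real.exp (energy y)

/-- The transition matrix of Gibbs sampling: pick a variable `v` uniformly at random and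
resample it from its conditional distribution given the other variables. -/
noncomputable def gibbsP {V S : Type*} [Fintype V] [DecidableEq V] [Fintype S] [DecidableEq S]
    (energy : (V → S) → ℝ) : Matrix (V → S) (V → S) ℝ :=
  fun x y =>
    (Fintype.card V : ℝ)⁻¹ * ∑ v : V,
      if ∀ u, u ≠ v → x u = y u then
        Real.exp (energy y) / ∑ s : S, Real.exp (energy (Function.update x v s))
      else 0

/-- The chain with transition matrix `P` is, at time `t`, within total variation distance
`1/4` of `pi`, from every starting state. -/
def MixedAt {Ω : Type*} [Fintype Ω] [DecidableEq Ω] (P : Matrix Ω Ω ℝ) (pi : Ω → ℝ)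
    (t : ℕ) : Prop :=
  ∀ x : Ω, ∀ A : Finset Ω, |∑ y ∈ A, ((P ^ t) x y - pi y)| ≤ 1 / 4

/-- The variables of the voting model: `none` is the query `Q` (with boolean value `true`
interpreted as `Q = 1` and `false` as `Q = -1`), `some (true, i)` is the voter `T i`, and
`some (false, i)` is the voter `F i` (with `true ↦ 1`, `false ↦ 0`). -/
abbrev VotingVar (n : ℕ) := Option (Bool × Fin n)

/-- The value `±1` of the query variable in world `x`. -/
noncomputable def qVal {n : ℕ} (x : VotingVar n → Bool) : ℝ := if x none = true then 1 else -1

/-- The number of voters `T i` (if `b = true`) resp. `F i` (if `b = false`) that are set in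
world `x`. -/
def numVoters {n : ℕ} (b : Bool) (x : VotingVar n → Bool) : ℕ :=
  (Finset.univ.filter fun i : Fin n => x (some (b, i)) = true).card

/-- The prior terms `Σ_i w_{T_i} T_i + Σ_i w_{F_i} F_i` of the voting model energy. -/
noncomputable def votingPriors {n : ℕ} (wT wF : Fin n → ℝ) (x : VotingVar n → Bool) : ℝ :=
  (∑ i, wT i * (if x (some (true, i)) = true then 1 else 0)) +
    ∑ i, wF i * (if x (some (false, i)) = true then 1 else 0)

/-- Energy of the voting model with logical semantics:
`w·Q·max_i T_i − w·Q·max_i F_i + Σ_i w_{T_i}·T_i + Σ_i w_{F_i}·F_i`. -/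
noncomputable def votingEnergyLogical (n : ℕ) (w : ℝ) (wT wF : Fin n → ℝ)
    (x : VotingVar n → Bool) : ℝ :=
  w * qVal x * (if 0 < numVoters true x then 1 else 0)
    - w * qVal x * (if 0 < numVoters false x then 1 else 0)
    + votingPriors wT wF x

/-- Energy of the voting model with ratio semantics:
`w·Q·log(1+Σ_i T_i) − w·Q·log(1+Σ_i F_i) + Σ_i w_{T_i}·T_i + Σ_i w_{F_i}·F_i`. -/
noncomputable def votingEnergyRatio (n : ℕ) (w : ℝ) (wT wF : Fin n → ℝ)
    (x : VotingVar n → Bool) : ℝ :=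
  w * qVal x * Real.log (1 + (numVoters true x : ℝ))
    - w * qVal x * Real.log (1 + (numVoters false x : ℝ))
    + votingPriors wT wF x

/-- Energy of the voting model with linear semantics:
`w·Q·Σ_i T_i − w·Q·Σ_i F_i + Σ_i w_{T_i}·T_i + Σ_i w_{F_i}·F_i`. -/
noncomputable def votingEnergyLinear (n : ℕ) (w : ℝ) (wT wF : Fin n → ℝ)
    (x : VotingVar n → Bool) : ℝ :=
  w * qVal x * (numVoters true x : ℝ) - w * qVal x * (numVoters false x : ℝ)
    + votingPriors wT wF x


/-! ### Escape from a set for a general chain -/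

/-- For a substochastic matrix `P` with `pi P ≤ pi`, the chain started from `pi` restricted to `S`
has, at time `t`, mass outside `S` at most `t` times the one-step flow from `S` to its
complement. -/
lemma escape_le {Ω : Type*} [Fintype Ω] [DecidableEq Ω] (P : Matrix Ω Ω ℝ) (pi : Ω → ℝ)
    (hP : ∀ x y, 0 ≤ P x y) (hrow : ∀ x, ∑ y, P x y ≤ 1) (hpi : ∀ x, 0 ≤ pi x)
    (hst : ∀ y, ∑ x, pi x * P x y ≤ pi y) (S : Finset Ω) (t : ℕ) :
    ∑ x ∈ S, pi x * ∑ y ∈ Sᶜ, (P ^ t) x y ≤ t * ∑ x ∈ S, pi x * ∑ y ∈ Sᶜ, P x y := by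
  have hPt : ∀ (t : ℕ) x y, 0 ≤ (P ^ t) x y := by
    intro t
    induction t with
    | zero =>
      intro x y
      rw [pow_zero, Matrix.one_apply]
      split_ifs <;> norm_num
    | succ t ih =>
      intro x y
      rw [pow_succ, Matrix.mul_apply]
      exact Finset.sum_nonneg fun z _ => mul_nonneg (ih x z) (hP z y)
  have hstt : ∀ (t : ℕ) y, ∑ x, pi x * (P ^ t) x y ≤ pi y := by
    intro t
    induction t with
    | zero =>
      intro y
      simp [Matrix.one_apply]
    | succ t ih =>
      intro y
      simp only [pow_succ, Matrix.mul_apply, Finset.mul_sum]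
      rw [Finset.sum_comm]
      refine le_trans (Finset.sum_le_sum fun z _ => ?_) (hst y)
      calc ∑ x, pi x * ((P ^ t) x z * P z y) = (∑ x, pi x * (P ^ t) x z) * P z y := by
            rw [Finset.sum_mul]
            exact Finset.sum_congr rfl fun x _ => by ring
        _ ≤ pi z * P z y := mul_le_mul_of_nonneg_right (ih z) (hP z y)
  induction t with
  | zero =>
    have : ∑ x ∈ S, pi x * ∑ y ∈ Sᶜ, (P ^ 0) x y = 0 := by
      refine Finset.sum_eq_zero fun x hx => ?_
      rw [Finset.sum_eq_zero, mul_zero]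
      intro y hy
      rw [pow_zero, Matrix.one_apply_ne]
      rintro rfl
      exact (Finset.mem_compl.mp hy) hx
    rw [this]
    simp
  | succ t ih =>
    -- `μ` is the law at time `t` of the chain started from `pi` restricted to `S`.
    set μ : Ω → ℝ := fun z => ∑ x ∈ S, pi x * (P ^ t) x z with hμ
    have hμ0 : ∀ z, 0 ≤ μ z := fun z =>
      Finset.sum_nonneg fun x _ => mul_nonneg (hpi x) (hPt t x z)
    have hμle : ∀ z, μ z ≤ pi z := by
      intro z
      refine le_trans ?_ (hstt t z)
      exact Finset.sum_le_sum_of_subset_of_nonneg (Finset.subset_univ S)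
        fun x _ _ => mul_nonneg (hpi x) (hPt t x z)
    have hcomp0 : ∀ z, 0 ≤ ∑ y ∈ Sᶜ, P z y := fun z => Finset.sum_nonneg fun y _ => hP z y
    have hcomp1 : ∀ z, ∑ y ∈ Sᶜ, P z y ≤ 1 := fun z =>
      (Finset.sum_le_sum_of_subset_of_nonneg (Finset.subset_univ _)
        fun y _ _ => hP z y).trans (hrow z)
    have hstep : ∑ x ∈ S, pi x * ∑ y ∈ Sᶜ, (P ^ (t + 1)) x y
        = ∑ z, μ z * ∑ y ∈ Sᶜ, P z y := by
      simp only [hμ, pow_succ, Matrix.mul_apply, Finset.sum_mul]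
      rw [Finset.sum_comm (s := Finset.univ)]
      refine Finset.sum_congr rfl fun x _ => ?_
      rw [Finset.sum_comm, Finset.mul_sum]
      refine Finset.sum_congr rfl fun z _ => ?_
      rw [← Finset.mul_sum]
      ring
    have hprev : ∑ x ∈ S, pi x * ∑ y ∈ Sᶜ, (P ^ t) x y = ∑ z ∈ Sᶜ, μ z := by
      simp only [hμ, Finset.mul_sum]
      exact Finset.sum_comm
    rw [hstep, ← Finset.sum_add_sum_compl S]
    have h1 : ∑ z ∈ S, μ z * ∑ y ∈ Sᶜ, P z y ≤ ∑ x ∈ S, pi x * ∑ y ∈ Sᶜ, P x y :=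
      Finset.sum_le_sum fun z _ => mul_le_mul_of_nonneg_right (hμle z) (hcomp0 z)
    have h2 : ∑ z ∈ Sᶜ, μ z * ∑ y ∈ Sᶜ, P z y ≤ ∑ z ∈ Sᶜ, μ z :=
      Finset.sum_le_sum fun z _ => mul_le_of_le_one_right (hμ0 z) (hcomp1 z)
    rw [← hprev] at h2
    push_cast
    linarith

/-! ### Gibbs sampling is stochastic and reversible -/

section Gibbs

variable {V S : Type*} [Fintype V] [DecidableEq V] [Fintype S] [DecidableEq S]

lemma gibbsP_nonneg (E : (V → S) → ℝ) (x y : V → S) : 0 ≤ gibbsP E x y := by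
  unfold gibbsP
  refine mul_nonneg (by positivity) (Finset.sum_nonneg fun v _ => ?_)
  split_ifs <;> positivity

lemma gibbsPi_nonneg (E : (V → S) → ℝ) (x : V → S) : 0 ≤ gibbsPi E x := by
  unfold gibbsPi
  positivity

lemma gibbsP_row (E : (V → S) → ℝ) (x : V → S) : ∑ y, gibbsP E x y ≤ 1 := by
  unfold gibbsP
  rw [← Finset.mul_sum, Finset.sum_comm]
  have key : ∀ v : V, (∑ y : V → S, if ∀ u, u ≠ v → x u = y u then
        Real.exp (E y) / ∑ s : S, Real.exp (E (Function.update x v s)) else 0) ≤ 1 := by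
    intro v
    rw [← Finset.sum_filter]
    have himg : (Finset.univ.filter fun y : V → S => ∀ u, u ≠ v → x u = y u)
        = Finset.univ.image (fun s : S => Function.update x v s) := by
      ext y
      simp only [Finset.mem_filter, Finset.mem_univ, true_and, Finset.mem_image]
      constructor
      · intro h
        refine ⟨y v, ?_⟩
        ext u
        by_cases hu : u = v
        · subst hu
          simp
        · simp [hu, h u hu]
      · rintro ⟨s, rfl⟩ u hu
        simp [hu]
    rw [himg, Finset.sum_image (fun a _ b _ h => Function.update_injective x v h),
      ← Finset.sum_div]
    exact div_self_le_one _
  calc (Fintype.card V : ℝ)⁻¹ * ∑ v : V, ∑ y : V → S, (if ∀ u, u ≠ v → x u = y u then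
        Real.exp (E y) / ∑ s : S, Real.exp (E (Function.update x v s)) else 0)
      ≤ (Fintype.card V : ℝ)⁻¹ * ∑ _v : V, 1 := by
        gcongr with v
        exact key v
    _ = (Fintype.card V : ℝ)⁻¹ * (Fintype.card V : ℝ) := by simp
    _ ≤ 1 := inv_mul_le_one

/-- Detailed balance. -/
lemma gibbs_reversible (E : (V → S) → ℝ) (x y : V → S) :
    gibbsPi E x * gibbsP E x y = gibbsPi E y * gibbsP E y x := by
  unfold gibbsPi gibbsP
  simp only [Finset.mul_sum]
  refine Finset.sum_congr rfl fun v _ => ?_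
  by_cases h : ∀ u, u ≠ v → x u = y u
  · have h' : ∀ u, u ≠ v → y u = x u := fun u hu => (h u hu).symm
    have hup : ∀ s, Function.update x v s = Function.update y v s := by
      intro s
      ext u
      by_cases hu : u = v
      · subst hu
        simp
      · simp [hu, h u hu]
    rw [if_pos h, if_pos h']
    simp only [hup]
    ring
  · have h' : ¬ ∀ u, u ≠ v → y u = x u := fun h' => h fun u hu => (h' u hu).symm
    rw [if_neg h, if_neg h']
    ring

lemma gibbs_stationary (E : (V → S) → ℝ) (y : V → S) :
    ∑ x, gibbsPi E x * gibbsP E x y ≤ gibbsPi E y := by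
  simp only [gibbs_reversible E _ y]
  rw [← Finset.mul_sum]
  exact mul_le_of_le_one_right (gibbsPi_nonneg E y) (gibbsP_row E y)

end Gibbs

/-! ### The voting model -/

/-- The energy `w·Q·(Σ T − Σ F)` of the voting model with linear semantics and zero priors. -/
noncomputable abbrev linE (n : ℕ) (w : ℝ) : (VotingVar n → Bool) → ℝ :=
  votingEnergyLinear n w (fun _ => 0) (fun _ => 0)

lemma linE_eq (n : ℕ) (w : ℝ) (x : VotingVar n → Bool) :
    linE n w x = w * qVal x * ((numVoters true x : ℝ) - numVoters false x) := by
  simp only [linE, votingEnergyLinear, votingPriors, zero_mul, Finset.sum_const_zero]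
  ring

/-- The worlds with `Q = 1`. -/
def qPos (n : ℕ) : Finset (VotingVar n → Bool) := Finset.univ.filter fun x => x none = true

/-- The symmetry of the model: negate `Q` and exchange the voters `T` and `F`. -/
def swapWorld {n : ℕ} (x : VotingVar n → Bool) : VotingVar n → Bool
  | none => !x none
  | some (b, i) => x (some (!b, i))

lemma swapWorld_swapWorld {n : ℕ} (x : VotingVar n → Bool) : swapWorld (swapWorld x) = x := by
  funext v
  rcases v with _ | ⟨b, i⟩ <;> simp [swapWorld]

lemma linE_swapWorld (n : ℕ) (w : ℝ) (x : VotingVar n → Bool) :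
    linE n w (swapWorld x) = linE n w x := by
  have h : ∀ b, numVoters b (swapWorld x) = numVoters (!b) x := fun b => rfl
  have hq : qVal (swapWorld x) = -qVal x := by
    unfold qVal
    cases hx : x none <;> simp [swapWorld, hx]
  rw [linE_eq, linE_eq, h, h, hq]
  simp only [Bool.not_true, Bool.not_false]
  ring

lemma sum_exp_symm (n : ℕ) (w : ℝ) :
    ∑ x ∈ qPos n, Real.exp (linE n w x) = ∑ x ∈ (qPos n)ᶜ, Real.exp (linE n w x) := by
  refine Finset.sum_bij' (fun x _ => swapWorld x) (fun x _ => swapWorld x) ?_ ?_ ?_ ?_ ?_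
  · intro x hx
    simpa [qPos, swapWorld] using hx
  · intro x hx
    simpa [qPos, swapWorld] using hx
  · intro x _
    exact swapWorld_swapWorld x
  · intro x _
    exact swapWorld_swapWorld x
  · intro x _
    rw [linE_swapWorld]

lemma sum_gibbsPi (n : ℕ) (w : ℝ) :
    ∑ x ∈ qPos n, gibbsPi (linE n w) x = 1 / 2 ∧
      ∑ x ∈ (qPos n)ᶜ, gibbsPi (linE n w) x = 1 / 2 := by
  have hZ : 0 < ∑ y, Real.exp (linE n w y) :=
    Finset.sum_pos (fun _ _ => Real.exp_pos _) Finset.univ_nonempty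
  have hsplit := Finset.sum_add_sum_compl (qPos n) fun x => Real.exp (linE n w x)
  have hsymm := sum_exp_symm n w
  simp only [gibbsPi]
  rw [← Finset.sum_div, ← Finset.sum_div]
  constructor <;> rw [div_eq_iff hZ.ne'] <;> linarith

/-- The partition function is at least the weight of the world with `Q = 1`, all `T` set and
no `F` set. -/
lemma exp_le_partition (n : ℕ) (w : ℝ) :
    Real.exp w ^ n ≤ ∑ y, Real.exp (linE n w y) := by
  let x : VotingVar n → Bool := fun v => match v with
    | none => true
    | some (b, _) => b
  have hE : linE n w x = n * w := by
    rw [linE_eq]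
    simp [qVal, numVoters, x]
    ring
  rw [← Real.exp_nat_mul, ← hE]
  exact Finset.single_le_sum (f := fun y => Real.exp (linE n w y))
    (fun _ _ => (Real.exp_pos _).le) (Finset.mem_univ x)

/-- From a world `x` with `Q = 1`, the stationary flow to the worlds with `Q = -1` is at most `1/Z`:
the only such world reachable in one step is `x` with `Q` flipped, whose energy is the negative
of that of `x`. -/
lemma flow_le (n : ℕ) (w : ℝ) (x : VotingVar n → Bool) (hx : x ∈ qPos n) :
    gibbsPi (linE n w) x * ∑ y ∈ (qPos n)ᶜ, gibbsP (linE n w) x y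
      ≤ (∑ y, Real.exp (linE n w y))⁻¹ := by
  have hx' : x none = true := by simpa [qPos] using hx
  set x' := Function.update x none false with hx'def
  have hE : linE n w x' = - linE n w x := by
    have h : ∀ b, numVoters b x' = numVoters b x := by
      intro b
      simp [numVoters, x']
    rw [linE_eq, linE_eq, h, h]
    simp [qVal, x', hx']
  have hsum : ∑ s : Bool, Real.exp (linE n w (Function.update x none s))
      = Real.exp (linE n w x) + Real.exp (- linE n w x) := by
    rw [Fintype.sum_bool, ← hx'def, hE]
    congr 3
    rw [← hx', Function.update_eq_self]
  have hD : 1 ≤ Real.exp (linE n w x) + Real.exp (- linE n w x) := by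
    rcases le_total 0 (linE n w x) with h | h
    · linarith [Real.one_le_exp h, Real.exp_pos (- linE n w x)]
    · linarith [Real.one_le_exp (neg_nonneg.mpr h), Real.exp_pos (linE n w x)]
  have hmove : ∑ y ∈ (qPos n)ᶜ, gibbsP (linE n w) x y ≤ Real.exp (- linE n w x) := by
    have hterm : ∀ y ∈ (qPos n)ᶜ, gibbsP (linE n w) x y
        ≤ if y = x' then Real.exp (- linE n w x) else 0 := by
      intro y hy
      have hy' : y none = false := by simpa [qPos] using hy
      unfold gibbsP
      rw [Finset.sum_eq_single none]
      · by_cases h : ∀ u, u ≠ none → x u = y u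
        · have hyx : y = x' := by
            funext u
            by_cases hu : u = none
            · subst hu
              simp [x', hy']
            · simp [x', hu, h u hu]
          rw [if_pos h, if_pos hyx, hsum, hyx, hE]
          have hcard : (Fintype.card (VotingVar n) : ℝ)⁻¹ ≤ 1 :=
            inv_le_one_of_one_le₀ (by exact_mod_cast Fintype.card_pos)
          calc _ ≤ 1 * (Real.exp (- linE n w x) / 1) := by
                gcongr
            _ = _ := by ring
        · rw [if_neg h, mul_zero]
          split_ifs <;> positivity
      · intro v _ hv
        refine if_neg fun h => ?_
        have := h none hv.symm
        simp [hx', hy'] at this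
      · simp
    calc _ ≤ ∑ y ∈ (qPos n)ᶜ, if y = x' then Real.exp (- linE n w x) else 0 :=
          Finset.sum_le_sum hterm
      _ ≤ ∑ y, if y = x' then Real.exp (- linE n w x) else 0 :=
          Finset.sum_le_sum_of_subset_of_nonneg (Finset.subset_univ _) fun y _ _ => by
            split_ifs <;> positivity
      _ = _ := by simp
  calc _ ≤ gibbsPi (linE n w) x * Real.exp (- linE n w x) :=
        mul_le_mul_of_nonneg_left hmove (gibbsPi_nonneg _ _)
    _ = _ := by
        rw [gibbsPi, div_mul_eq_mul_div, ← Real.exp_add, add_neg_cancel, Real.exp_zero, one_div]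

lemma total_flow_le (n : ℕ) (w : ℝ) :
    ∑ x ∈ qPos n, gibbsPi (linE n w) x * ∑ y ∈ (qPos n)ᶜ, gibbsP (linE n w) x y
      ≤ 2 * 4 ^ n / Real.exp w ^ n := by
  have hcard : ((qPos n).card : ℝ) ≤ 2 * 4 ^ n := by
    have h1 : (qPos n).card ≤ Fintype.card (VotingVar n → Bool) := Finset.card_le_univ _
    have h2 : Fintype.card (VotingVar n → Bool) = 2 * 4 ^ n := by
      simp only [Fintype.card_fun, Fintype.card_option, Fintype.card_prod, Fintype.card_bool,
        Fintype.card_fin]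
      rw [pow_succ, pow_mul]
      norm_num [mul_comm]
    rw [h2] at h1
    exact_mod_cast h1
  have hZ : (∑ y, Real.exp (linE n w y))⁻¹ ≤ (Real.exp w ^ n)⁻¹ :=
    inv_anti₀ (by positivity) (exp_le_partition n w)
  calc _ ≤ ∑ _x ∈ qPos n, (Real.exp w ^ n)⁻¹ :=
        Finset.sum_le_sum fun x hx => (flow_le n w x hx).trans hZ
    _ = (qPos n).card * (Real.exp w ^ n)⁻¹ := by rw [Finset.sum_const, nsmul_eq_mul]
    _ ≤ 2 * 4 ^ n * (Real.exp w ^ n)⁻¹ := by gcongr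
    _ = _ := by rw [div_eq_mul_inv]

/-- Bottleneck bound: mixing at time `t` puts mass `≥ 1/4` on `Q = -1` from each start, hence mass
`≥ 1/8` when starting from `π` restricted to `Q = 1`. -/
lemma mixed_flow (n : ℕ) (w : ℝ) (t : ℕ) (h : MixedAt (gibbsP (linE n w)) (gibbsPi (linE n w)) t) :
    1 / 8 ≤ t * (2 * 4 ^ n / Real.exp w ^ n) := by
  obtain ⟨hS, hSc⟩ := sum_gibbsPi n w
  have hesc := escape_le (gibbsP (linE n w)) (gibbsPi (linE n w)) (gibbsP_nonneg _) (gibbsP_row _)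
    (gibbsPi_nonneg _) (gibbs_stationary _) (qPos n) t
  have hquarter : ∀ x, 1 / 4 ≤ ∑ y ∈ (qPos n)ᶜ, (gibbsP (linE n w) ^ t) x y := by
    intro x
    have := (abs_le.mp (h x (qPos n)ᶜ)).1
    rw [Finset.sum_sub_distrib, hSc] at this
    linarith
  calc (1 / 8 : ℝ) = ∑ x ∈ qPos n, gibbsPi (linE n w) x * (1 / 4) := by
        rw [← Finset.sum_mul, hS]
        norm_num
    _ ≤ ∑ x ∈ qPos n, gibbsPi (linE n w) x * ∑ y ∈ (qPos n)ᶜ, (gibbsP (linE n w) ^ t) x y :=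
        Finset.sum_le_sum fun x _ => mul_le_mul_of_nonneg_left (hquarter x) (gibbsPi_nonneg _ _)
    _ ≤ _ := hesc
    _ ≤ _ := mul_le_mul_of_nonneg_left (total_flow_le n w) (by positivity)

/-- **Lower bound for the voting model, linear semantics.**  For any sufficiently large
fixed vote weight `w > 0` and zero prior weights, there is a constant `c > 0` (depending
only on `w`) such that for all sufficiently large `n`, Gibbs sampling on the voting model
with linear semantics is not mixed before time `2^{c·n}`. -/
theorem stmt14 :
    ∃ w₀ : ℝ, 0 < w₀ ∧ ∀ w : ℝ, w₀ ≤ w →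
      ∃ c : ℝ, 0 < c ∧ ∃ N : ℕ, ∀ n : ℕ, N ≤ n →
        ∀ t : ℕ, MixedAt (gibbsP (votingEnergyLinear n w (fun _ => 0) (fun _ => 0)))
            (gibbsPi (votingEnergyLinear n w (fun _ => 0) (fun _ => 0))) t →
          (2 : ℝ) ^ (c * (n : ℝ)) ≤ (t : ℝ) := by
  refine ⟨8, by norm_num, fun w hw => ⟨1, by norm_num, 1, fun n hn t h => ?_⟩⟩
  have hflow := mixed_flow n w t h
  -- From `e ≥ 2`; it makes `e^w / 4 ≥ 64`, which absorbs both the constant `16` and `2^n`.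
  have hexp : (256 : ℝ) ≤ Real.exp w := by
    have h1 : (2 : ℝ) ≤ Real.exp 1 := by linarith [Real.add_one_le_exp (1 : ℝ)]
    calc (256 : ℝ) = 2 ^ 8 := by norm_num
      _ ≤ Real.exp 1 ^ 8 := by gcongr
      _ = Real.exp 8 := by
        rw [← Real.exp_nat_mul]
        norm_num
      _ ≤ Real.exp w := Real.exp_le_exp.mpr hw
  have hpow : (256 : ℝ) ^ n ≤ Real.exp w ^ n := by gcongr
  rw [← mul_div_assoc, le_div_iff₀ (by positivity)] at hflow
  rw [one_mul, Real.rpow_natCast]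
  have h256 : (256 : ℝ) ^ n = 32 ^ n * (2 ^ n * 4 ^ n) := by
    rw [← mul_pow, ← mul_pow]
    norm_num
  have h32 : (16 : ℝ) ≤ 32 ^ n := by
    calc (16 : ℝ) ≤ 32 ^ 1 := by norm_num
      _ ≤ 32 ^ n := pow_le_pow_right₀ (by norm_num) hn
  have h4 : (0 : ℝ) < 4 ^ n := by positivity
  have hmul : (16 : ℝ) * (2 ^ n * 4 ^ n) ≤ 32 ^ n * (2 ^ n * 4 ^ n) := by gcongr
  refine le_of_mul_le_mul_right ?_ h4
  linarith
end
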